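/- Let Y be a Banach space, A, B bounded linear operators on Y, 1 < α < 2, 0 < β < 1, and let g : [0,∞) → Y be continuous. Define x̄(t) = ∫₀ᵗ [ ∑_{k=0}^∞ ∑_{m=0}^∞ Q_{k,m}^{A,B} (t−s)^{k(α−β)+mα+α−1} / Γ(k(α−β)+mα+α) ] g(s) ds for t ≥ 0. Then x̄(0) = 0, x̄ is differentiable with x̄′(0) = 0, the Riemann–Liouville fractional derivatives (ᴿᴸD^{α}x̄)(t) and (ᴿᴸD^{β}x̄)(t) exist for every t > 0, and x̄ satisfies (ᴿᴸD^{α}x̄)(t) − A(ᴿᴸD^{β}x̄)(t) = B x̄(t) + g(t) for all t > 0. -/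

import Mathlib

open MeasureTheory

/-- The operators `Q_{k,m}^{A,B}` from the paper: `Q k 0 = A^k`, `Q 0 m = B^m`, and
`Q k m = ∑_{l=0}^{k} A^{k-l} B Q l (m-1)` for `m ≥ 1`. -/
noncomputable def Q {𝔸 : Type*} [Ring 𝔸] (A B : 𝔸) : ℕ → ℕ → 𝔸
  | k, 0 => A ^ k
  | k, m + 1 => ∑ l ∈ Finset.range (k + 1), A ^ (k - l) * B * Q A B l m

/-!
Write `J^γ` for the fractional integral of order `γ` with base point `0`. The function `x̄` is the
Neumann series of `J^α (1 - A J^(α-β) - B J^α)⁻¹ g`, since `Q A B k m` is the sum of all words with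
`k` letters `A` and `m` letters `B`; sorting these words by their first letter gives the Pascal
recursion `Q (k+1) (m+1) = A Q k (m+1) + B Q (k+1) m`. Let `F_c` be the same series with `J^c` in
place of the outer `J^α`. The recursion says `F_c = J^c g + A F_(c+α-β) + B F_(c+α)`, and the
semigroup law `J^γ J^δ = J^(γ+δ)` (Euler's Beta integral) says `J^δ F_c = F_(c+δ)`; in particular
`F_(c+1)` is a primitive of `F_c`. So `x̄ = F_α` has `D^β x̄ = (F_(α-β+1))' = F_(α-β)` and
`D^α x̄ = (F_2)'' = (F_1)'`, and differentiating the recursion for `F_1` gives the equation.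
The series converge because `Γ(x + 1) ≥ e^(-R) R^x` for every `R ≥ 0`.
-/

open Set Filter Topology

section Kernel

/-- The Riemann–Liouville kernel `x ^ (γ - 1) / Γ(γ)`, whose convolution on the half-line is
fractional integration of order `γ`. It is meaningful for `γ > 0` and `x > 0`; at `x < 0` it takes
the junk values of `Real.rpow`. -/
noncomputable def rlKernel (γ x : ℝ) : ℝ := x ^ (γ - 1) / Real.Gamma γ

variable {γ δ t x : ℝ}

lemma rlKernel_nonneg (hγ : 0 ≤ γ) (hx : 0 ≤ x) : 0 ≤ rlKernel γ x :=
  div_nonneg (Real.rpow_nonneg hx _) (Real.Gamma_nonneg_of_nonneg hγ)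

lemma measurable_rlKernel (γ : ℝ) : Measurable (rlKernel γ) := by
  unfold rlKernel; fun_prop

lemma rlKernel_mul (ht : 0 ≤ t) (hx : 0 ≤ x) :
    rlKernel γ (t * x) = t ^ (γ - 1) * rlKernel γ x := by
  rw [rlKernel, rlKernel, Real.mul_rpow ht hx, mul_div_assoc]

lemma intervalIntegrable_rlKernel_sub (hγ : 0 < γ) (t : ℝ) :
    IntervalIntegrable (fun s ↦ rlKernel γ (t - s)) volume 0 t := by
  have h : IntervalIntegrable (fun x : ℝ ↦ x ^ (γ - 1)) volume t 0 :=
    intervalIntegral.intervalIntegrable_rpow' (by linarith)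
  simpa only [rlKernel, sub_self, sub_zero] using (h.comp_sub_left t).div_const (Real.Gamma γ)

lemma integral_rlKernel_sub (hγ : 0 < γ) (t : ℝ) :
    ∫ s in (0 : ℝ)..t, rlKernel γ (t - s) = t ^ γ / Real.Gamma (γ + 1) := by
  rw [intervalIntegral.integral_comp_sub_left (rlKernel γ), sub_self, sub_zero]
  simp only [rlKernel]
  rw [intervalIntegral.integral_div, integral_rpow (.inl (by linarith)), sub_add_cancel,
    Real.zero_rpow hγ.ne', sub_zero, Real.Gamma_add_one hγ.ne', div_div]

lemma integral_rpow_mul_sub_rpow (hγ : 0 < γ) (hδ : 0 < δ) (hx : 0 < x) :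
    ∫ u in (0 : ℝ)..x, u ^ (γ - 1) * (x - u) ^ (δ - 1) =
      x ^ (γ + δ - 1) * (Real.Gamma γ * Real.Gamma δ / Real.Gamma (γ + δ)) := by
  have hcast : ∫ u in (0 : ℝ)..x, (u : ℂ) ^ ((γ : ℂ) - 1) * ((x : ℂ) - u) ^ ((δ : ℂ) - 1) =
      ((∫ u in (0 : ℝ)..x, u ^ (γ - 1) * (x - u) ^ (δ - 1) : ℝ) : ℂ) := by
    rw [← intervalIntegral.integral_ofReal]
    refine intervalIntegral.integral_congr fun u hu ↦ ?_
    rw [uIcc_of_le hx.le] at hu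
    simp only [Complex.ofReal_mul, Complex.ofReal_cpow hu.1,
      Complex.ofReal_cpow (sub_nonneg.2 hu.2), Complex.ofReal_sub, Complex.ofReal_one]
  have hbeta := Complex.betaIntegral_scaled γ δ hx
  rw [Complex.betaIntegral_eq_Gamma_mul_div _ _ (by simpa) (by simpa), hcast,
    ← Complex.ofReal_add, Complex.Gamma_ofReal, Complex.Gamma_ofReal, Complex.Gamma_ofReal,
    ← Complex.ofReal_one, ← Complex.ofReal_sub, ← Complex.ofReal_cpow hx.le] at hbeta
  exact_mod_cast hbeta

lemma integral_rlKernel_mul_rlKernel_sub (hγ : 0 < γ) (hδ : 0 < δ) (hx : 0 < x) :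
    ∫ u in (0 : ℝ)..x, rlKernel γ u * rlKernel δ (x - u) = rlKernel (γ + δ) x := by
  have hΓγ := (Real.Gamma_pos_of_pos hγ).ne'
  have hΓδ := (Real.Gamma_pos_of_pos hδ).ne'
  simp only [rlKernel, div_mul_div_comm]
  rw [intervalIntegral.integral_div, integral_rpow_mul_sub_rpow hγ hδ hx]
  field_simp

lemma intervalIntegrable_rlKernel_mul_rlKernel_sub (hγ : 0 < γ) (hδ : 0 < δ) (hx : 0 ≤ x) :
    IntervalIntegrable (fun u ↦ rlKernel γ u * rlKernel δ (x - u)) volume 0 x := by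
  rcases hx.eq_or_lt with rfl | hx
  · exact .refl
  · -- The Bochner integral of a non-integrable function is `0`, and this one is positive.
    apply intervalIntegral.intervalIntegrable_of_integral_ne_zero
    have := Real.Gamma_pos_of_pos (add_pos hγ hδ)
    rw [integral_rlKernel_mul_rlKernel_sub hγ hδ hx, rlKernel]
    positivity

end Kernel

section RLIntegral

variable {Y Z : Type*} [NormedAddCommGroup Y] [NormedSpace ℝ Y]
  [NormedAddCommGroup Z] [NormedSpace ℝ Z] {γ δ t M : ℝ} {h : ℝ → Y}

/-- The Riemann–Liouville fractional integral of order `γ > 0` with base point `0`. -/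
noncomputable def rlIntegral (γ : ℝ) (h : ℝ → Y) (t : ℝ) : Y :=
  ∫ s in (0 : ℝ)..t, rlKernel γ (t - s) • h s

@[simp]
lemma rlIntegral_zero (γ : ℝ) (h : ℝ → Y) : rlIntegral γ h 0 = 0 :=
  intervalIntegral.integral_same

lemma inv_Gamma_smul_integral (γ : ℝ) (h : ℝ → Y) (t : ℝ) :
    (Real.Gamma γ)⁻¹ • ∫ s in (0 : ℝ)..t, (t - s) ^ (γ - 1) • h s = rlIntegral γ h t := by
  simp only [rlIntegral, rlKernel, ← intervalIntegral.integral_smul, smul_smul, div_eq_inv_mul]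

lemma rlIntegral_congr {h' : ℝ → Y} (ht : 0 ≤ t) (hh : EqOn h h' (Icc 0 t)) :
    rlIntegral γ h t = rlIntegral γ h' t := by
  refine intervalIntegral.integral_congr fun s hs ↦ ?_
  rw [uIcc_of_le ht] at hs
  simp only [hh hs]

lemma intervalIntegrable_rlKernel_smul (hγ : 0 < γ) (ht : 0 ≤ t) (hh : ContinuousOn h (Icc 0 t)) :
    IntervalIntegrable (fun s ↦ rlKernel γ (t - s) • h s) volume 0 t :=
  (intervalIntegrable_rlKernel_sub hγ t).smul_continuousOn (by rwa [uIcc_of_le ht])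

lemma rlIntegral_clm_comp [CompleteSpace Y] [CompleteSpace Z] (A : Y →L[ℝ] Z)
    (hγ : 0 < γ) (ht : 0 ≤ t) (hh : ContinuousOn h (Icc 0 t)) :
    rlIntegral γ (fun s ↦ A (h s)) t = A (rlIntegral γ h t) := by
  rw [rlIntegral, rlIntegral,
    ← A.intervalIntegral_comp_comm (intervalIntegrable_rlKernel_smul hγ ht hh)]
  simp only [map_smul]

lemma integral_norm_rlKernel_smul_le (hγ : 0 < γ) (ht : 0 ≤ t)
    (hM : ∀ s ∈ Icc 0 t, ‖h s‖ ≤ M) :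
    ∫ s in (0 : ℝ)..t, ‖rlKernel γ (t - s) • h s‖ ≤ M * (t ^ γ / Real.Gamma (γ + 1)) := by
  rw [← integral_rlKernel_sub hγ t, ← intervalIntegral.integral_const_mul,
    intervalIntegral.integral_of_le ht, intervalIntegral.integral_of_le ht]
  refine integral_mono_of_nonneg (.of_forall fun _ ↦ norm_nonneg _)
    ((intervalIntegrable_rlKernel_sub hγ t).const_mul M).1
    (ae_restrict_of_forall_mem measurableSet_Ioc fun s hs ↦ ?_)
  have hk : 0 ≤ rlKernel γ (t - s) := rlKernel_nonneg hγ.le (sub_nonneg.2 hs.2)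
  simp only [norm_smul, Real.norm_of_nonneg hk, mul_comm M]
  exact mul_le_mul_of_nonneg_left (hM s (Ioc_subset_Icc_self hs)) hk

lemma norm_rlIntegral_le (hγ : 0 < γ) (ht : 0 ≤ t) (hM : ∀ s ∈ Icc 0 t, ‖h s‖ ≤ M) :
    ‖rlIntegral γ h t‖ ≤ M * (t ^ γ / Real.Gamma (γ + 1)) :=
  (intervalIntegral.norm_integral_le_integral_norm ht).trans
    (integral_norm_rlKernel_smul_le hγ ht hM)

lemma hasSum_rlIntegral {ι : Type*} [Countable ι] {γ M : ι → ℝ} {h : ι → ℝ → Y}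
    (hγ : ∀ i, 0 < γ i) (ht : 0 ≤ t) (hh : ∀ i, ContinuousOn (h i) (Icc 0 t))
    (hM : ∀ i, ∀ s ∈ Icc 0 t, ‖h i s‖ ≤ M i)
    (hsum : Summable fun i ↦ M i * (t ^ γ i / Real.Gamma (γ i + 1))) :
    HasSum (fun i ↦ rlIntegral (γ i) (h i) t)
      (∫ s in (0 : ℝ)..t, ∑' i, rlKernel (γ i) (t - s) • h i s) := by
  simp only [rlIntegral, intervalIntegral.integral_of_le ht]
  refine hasSum_integral_of_summable_integral_norm
    (fun i ↦ (intervalIntegrable_rlKernel_smul (hγ i) ht (hh i)).1)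
    (hsum.of_nonneg_of_le (fun i ↦ integral_nonneg fun _ ↦ norm_nonneg _) fun i ↦ ?_)
  simpa only [intervalIntegral.integral_of_le ht]
    using integral_norm_rlKernel_smul_le (hγ i) ht (hM i)

lemma rlIntegral_eq_rpow_smul_integral (hγ : 0 < γ) (h : ℝ → Y) (ht : 0 ≤ t) :
    rlIntegral γ h t = t ^ γ • ∫ u in (0 : ℝ)..1, rlKernel γ (1 - u) • h (t * u) := by
  rcases ht.eq_or_lt with rfl | ht
  · rw [rlIntegral_zero, Real.zero_rpow hγ.ne', zero_smul]
  have hsubst := intervalIntegral.smul_integral_comp_mul_left (a := 0) (b := 1)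
    (fun s ↦ rlKernel γ (t - s) • h s) t
  rw [mul_zero, mul_one] at hsubst
  rw [rlIntegral, ← hsubst, ← intervalIntegral.integral_smul, ← intervalIntegral.integral_smul]
  refine intervalIntegral.integral_congr fun u hu ↦ ?_
  rw [uIcc_of_le zero_le_one] at hu
  have hpow : t ^ γ = t * t ^ (γ - 1) := by
    rw [Real.rpow_sub_one ht.ne', mul_div_cancel₀ _ ht.ne']
  rw [← mul_one_sub, rlKernel_mul ht.le (sub_nonneg.2 hu.2), hpow]
  simp only [smul_smul, mul_assoc]

lemma continuousOn_rlIntegral (hγ : 0 < γ) (hh : ContinuousOn h (Ici 0)) :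
    ContinuousOn (rlIntegral γ h) (Ici 0) := by
  suffices hc : ContinuousOn
      (fun t ↦ ∫ u in (0 : ℝ)..1, rlKernel γ (1 - u) • h (t * u)) (Ici 0) from
    ((Real.continuous_rpow_const hγ.le).continuousOn.smul hc).congr
      fun t ht ↦ rlIntegral_eq_rpow_smul_integral hγ h ht
  intro t₀ ht₀
  obtain ⟨M, hM⟩ := (isCompact_Icc (a := (0 : ℝ)) (b := t₀ + 1)).exists_bound_of_continuousOn
    (hh.mono Icc_subset_Ici_self)
  have hnear : ∀ᶠ t in 𝓝[Ici 0] t₀, 0 ≤ t ∧ t ≤ t₀ + 1 :=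
    eventually_mem_nhdsWithin.and
      (mem_nhdsWithin_of_mem_nhds (Iic_mem_nhds (lt_add_one t₀)))
  refine intervalIntegral.continuousWithinAt_of_dominated_interval
    (bound := fun u ↦ rlKernel γ (1 - u) * M) ?_ ?_
    ((intervalIntegrable_rlKernel_sub hγ 1).mul_const M) ?_
  · filter_upwards [hnear] with t ht
    have hcont : ContinuousOn (fun u ↦ h (t * u)) (Icc 0 1) :=
      hh.comp (by fun_prop) fun u hu ↦ mul_nonneg ht.1 hu.1
    exact (intervalIntegrable_rlKernel_smul hγ zero_le_one hcont).def'.aestronglyMeasurable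
  · filter_upwards [hnear] with t ht
    refine .of_forall fun u hu ↦ ?_
    rw [uIoc_of_le zero_le_one] at hu
    have hk : 0 ≤ rlKernel γ (1 - u) := rlKernel_nonneg hγ.le (sub_nonneg.2 hu.2)
    rw [norm_smul, Real.norm_of_nonneg hk]
    exact mul_le_mul_of_nonneg_left
      (hM _ ⟨mul_nonneg ht.1 hu.1.le, (mul_le_of_le_one_right ht.1 hu.2).trans ht.2⟩) hk
  · refine .of_forall fun u hu ↦ ?_
    rw [uIoc_of_le zero_le_one] at hu
    have hcont : ContinuousOn (fun t ↦ h (t * u)) (Ici 0) :=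
      hh.comp (by fun_prop) fun t ht ↦ mul_nonneg ht hu.1.le
    exact (hcont t₀ ht₀).const_smul _

lemma hasDerivWithinAt_rlIntegral_one [CompleteSpace Y] (hh : ContinuousOn h (Ici 0))
    (ht : 0 ≤ t) : HasDerivWithinAt (rlIntegral 1 h) (h t) (Ici 0) t := by
  have hext : Continuous fun s ↦ h (max s 0) :=
    hh.comp_continuous (by fun_prop) fun s ↦ le_max_right s 0
  have hderiv := intervalIntegral.integral_hasDerivAt_right (hext.intervalIntegrable 0 t)
    (hext.stronglyMeasurableAtFilter _ _) hext.continuousAt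
  rw [max_eq_left ht] at hderiv
  refine hderiv.hasDerivWithinAt.congr_of_mem (fun x hx ↦ ?_) ht
  rw [rlIntegral_congr hx fun s hs ↦ congrArg h (max_eq_left hs.1).symm]
  simp [rlIntegral, rlKernel]

end RLIntegral

section Semigroup

open scoped Convolution

variable {E E' F : Type*} [NormedAddCommGroup E] [NormedSpace ℝ E] [NormedAddCommGroup E']
  [NormedSpace ℝ E'] [NormedAddCommGroup F] [NormedSpace ℝ F]

lemma convolutionExistsAt_indicator_Ioi {f : ℝ → E} {g : ℝ → E'} {L : E →L[ℝ] E' →L[ℝ] F} {x : ℝ}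
    (hfg : 0 ≤ x → IntervalIntegrable (fun s ↦ L (f s) (g (x - s))) volume 0 x) :
    ConvolutionExistsAt ((Ioi 0).indicator f) ((Ioi 0).indicator g) x L := by
  have hind : (fun s ↦ L ((Ioi 0).indicator f s) ((Ioi 0).indicator g (x - s))) =
      (Ioo 0 x).indicator fun s ↦ L (f s) (g (x - s)) := by
    ext s
    by_cases h0 : 0 < s <;> by_cases hx : s < x <;> simp [indicator, h0, hx]
  rw [ConvolutionExistsAt, hind, integrable_indicator_iff measurableSet_Ioo]
  rcases le_or_gt 0 x with hx | hx
  · exact (intervalIntegrable_iff_integrableOn_Ioo_of_le hx).1 (hfg hx)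
  · rw [Ioo_eq_empty hx.not_gt]
    exact integrableOn_empty

variable {Y : Type*} [NormedAddCommGroup Y] [NormedSpace ℝ Y] {γ δ t : ℝ} {h : ℝ → Y}

lemma norm_indicator_rlKernel (hγ : 0 ≤ γ) :
    (fun x ↦ ‖(Ioi 0).indicator (rlKernel γ) x‖) = (Ioi 0).indicator (rlKernel γ) :=
  funext fun x ↦ Real.norm_of_nonneg <|
    indicator_nonneg (fun _ hx ↦ rlKernel_nonneg hγ (le_of_lt hx)) x

lemma indicator_rlKernel_convolution (hγ : 0 < γ) (hδ : 0 < δ) :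
    ((Ioi 0).indicator (rlKernel γ) ⋆[ContinuousLinearMap.mul ℝ ℝ] (Ioi 0).indicator (rlKernel δ)) =
      (Ioi 0).indicator (rlKernel (γ + δ)) := by
  rw [← posConvolution_eq_convolution_indicator _ _ _ volume]
  exact indicator_congr fun x hx ↦ integral_rlKernel_mul_rlKernel_sub hγ hδ hx

lemma indicator_convolution_rlKernel (γ : ℝ) (h : ℝ → Y) :
    ((Ioi 0).indicator h ⋆[(ContinuousLinearMap.lsmul ℝ ℝ).flip] (Ioi 0).indicator (rlKernel γ)) =
      (Ioi 0).indicator (rlIntegral γ h) := by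
  rw [← posConvolution_eq_convolution_indicator _ _ _ volume]
  rfl

theorem rlIntegral_rlIntegral [CompleteSpace Y] (hγ : 0 < γ) (hδ : 0 < δ) (ht : 0 ≤ t)
    (hh : ContinuousOn h (Ici 0)) :
    rlIntegral γ (rlIntegral δ h) t = rlIntegral (δ + γ) h t := by
  rcases ht.eq_or_lt with rfl | ht
  · simp only [rlIntegral_zero]
  have hkernel : ∀ γ, AEStronglyMeasurable ((Ioi 0).indicator (rlKernel γ)) := fun γ ↦
    ((measurable_rlKernel γ).indicator measurableSet_Ioi).aestronglyMeasurable
  have hassoc := convolution_assoc (μ := volume) (ν := volume) (x₀ := t)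
    (f := (Ioi 0).indicator h) (g := (Ioi 0).indicator (rlKernel δ))
    (k := (Ioi 0).indicator (rlKernel γ))
    (ContinuousLinearMap.lsmul ℝ ℝ).flip (ContinuousLinearMap.lsmul ℝ ℝ).flip
    (ContinuousLinearMap.lsmul ℝ ℝ).flip (ContinuousLinearMap.mul ℝ ℝ)
    (fun y a b ↦ smul_comm b a y |>.trans (mul_smul a b y).symm)
    ((aestronglyMeasurable_indicator_iff measurableSet_Ioi).2
      ((hh.mono Ioi_subset_Ici_self).aestronglyMeasurable measurableSet_Ioi))
    (hkernel δ) (hkernel γ) ?_ ?_ ?_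
  · rw [indicator_rlKernel_convolution hδ hγ] at hassoc
    simpa only [indicator_convolution_rlKernel, indicator_of_mem (mem_Ioi.2 ht)] using hassoc
  · exact .of_forall fun x ↦ convolutionExistsAt_indicator_Ioi fun hx ↦
      intervalIntegrable_rlKernel_smul hδ hx (hh.mono Icc_subset_Ici_self)
  · rw [norm_indicator_rlKernel hγ.le, norm_indicator_rlKernel hδ.le]
    exact .of_forall fun x ↦ convolutionExistsAt_indicator_Ioi
      (intervalIntegrable_rlKernel_mul_rlKernel_sub hδ hγ)
  · rw [norm_indicator_rlKernel hγ.le, norm_indicator_rlKernel hδ.le,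
      indicator_rlKernel_convolution hδ hγ]
    simp only [norm_indicator_eq_indicator_norm]
    refine convolutionExistsAt_indicator_Ioi fun ht ↦ ?_
    simpa only [ContinuousLinearMap.mul_apply', smul_eq_mul, mul_comm] using
      intervalIntegrable_rlKernel_smul (add_pos hδ hγ) ht (hh.mono Icc_subset_Ici_self).norm

end Semigroup

section Series

variable {ι Y Z : Type*} [NormedAddCommGroup Y] [NormedSpace ℝ Y]
  [NormedAddCommGroup Z] [NormedSpace ℝ Z] {C : ι → Y →L[ℝ] Z} {γ : ι → ℝ} {g : ℝ → Y} {t δ : ℝ}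

/-- The sum over `i` of the fractional integrals of `g` of orders `γ i`, with operator coefficients
`C i`. It is `0` where the series diverges. -/
noncomputable def rlSeries (C : ι → Y →L[ℝ] Z) (γ : ι → ℝ) (g : ℝ → Y) (t : ℝ) : Z :=
  ∑' i, C i (rlIntegral (γ i) g t)

@[simp]
lemma rlSeries_zero (C : ι → Y →L[ℝ] Z) (γ : ι → ℝ) (g : ℝ → Y) : rlSeries C γ g 0 = 0 := by
  simp [rlSeries]

/-- The condition that the generalized Mittag-Leffler series `∑ i, C i t ^ γ i / Γ(γ i + 1)` of
positive orders converges absolutely for all `t ≥ 0`, which controls `rlSeries C γ`. -/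
structure MittagLefflerSummable (C : ι → Y →L[ℝ] Z) (γ : ι → ℝ) : Prop where
  order_pos : ∀ i, 0 < γ i
  summable : ∀ t, 0 ≤ t → Summable fun i ↦ ‖C i‖ * (t ^ γ i / Real.Gamma (γ i + 1))

namespace MittagLefflerSummable

lemma exists_summable_bound (hC : MittagLefflerSummable C γ) (hg : ContinuousOn g (Ici 0))
    (ht : 0 ≤ t) : ∃ b : ι → ℝ, Summable b ∧
      ∀ i, ∀ s ∈ Icc 0 t, ‖C i (rlIntegral (γ i) g s)‖ ≤ b i := by
  obtain ⟨M, hM⟩ := (isCompact_Icc (a := (0 : ℝ)) (b := t)).exists_bound_of_continuousOn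
    (hg.mono Icc_subset_Ici_self)
  have hM0 : 0 ≤ M := (norm_nonneg _).trans (hM 0 ⟨le_rfl, ht⟩)
  refine ⟨_, (hC.summable t ht).mul_left M, fun i s hs ↦ ?_⟩
  have hγ := hC.order_pos i
  have := Real.Gamma_pos_of_pos (add_pos hγ one_pos)
  calc ‖C i (rlIntegral (γ i) g s)‖ ≤ ‖C i‖ * ‖rlIntegral (γ i) g s‖ := (C i).le_opNorm _
    _ ≤ ‖C i‖ * (M * (s ^ γ i / Real.Gamma (γ i + 1))) := by
        gcongr
        exact norm_rlIntegral_le hγ hs.1 fun r hr ↦ hM r ⟨hr.1, hr.2.trans hs.2⟩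
    _ ≤ ‖C i‖ * (M * (t ^ γ i / Real.Gamma (γ i + 1))) := by
        gcongr
        exacts [hs.1, hs.2]
    _ = M * (‖C i‖ * (t ^ γ i / Real.Gamma (γ i + 1))) := mul_left_comm ..

lemma hasSum_rlSeries [CompleteSpace Z] (hC : MittagLefflerSummable C γ)
    (hg : ContinuousOn g (Ici 0)) (ht : 0 ≤ t) :
    HasSum (fun i ↦ C i (rlIntegral (γ i) g t)) (rlSeries C γ g t) := by
  obtain ⟨b, hb, hle⟩ := hC.exists_summable_bound hg ht
  exact (Summable.of_norm_bounded hb fun i ↦ hle i t ⟨ht, le_rfl⟩).hasSum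

lemma continuousOn_term (hC : MittagLefflerSummable C γ) (hg : ContinuousOn g (Ici 0)) (i : ι) :
    ContinuousOn (fun t ↦ C i (rlIntegral (γ i) g t)) (Ici 0) :=
  (C i).continuous.comp_continuousOn (continuousOn_rlIntegral (hC.order_pos i) hg)

lemma continuousOn_rlSeries [CompleteSpace Z] (hC : MittagLefflerSummable C γ)
    (hg : ContinuousOn g (Ici 0)) : ContinuousOn (rlSeries C γ g) (Ici 0) := by
  refine continuousOn_of_locally_continuousOn fun t ht ↦
    ⟨Iio (t + 1), isOpen_Iio, lt_add_one t, ?_⟩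
  obtain ⟨b, hb, hle⟩ := hC.exists_summable_bound hg (add_nonneg ht zero_le_one)
  exact continuousOn_tsum (fun i ↦ (hC.continuousOn_term hg i).mono inter_subset_left) hb
    fun i s hs ↦ hle i s ⟨hs.1, le_of_lt hs.2⟩

variable [Countable ι] [CompleteSpace Y] [CompleteSpace Z]

theorem rlIntegral_rlSeries (hC : MittagLefflerSummable C γ) (hg : ContinuousOn g (Ici 0))
    (hδ : 0 < δ) (ht : 0 ≤ t) :
    rlIntegral δ (rlSeries C γ g) t = rlSeries C (fun i ↦ γ i + δ) g t := by
  obtain ⟨b, hb, hle⟩ := hC.exists_summable_bound hg ht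
  have hsum := hasSum_rlIntegral (fun _ ↦ hδ) ht
    (fun i ↦ (hC.continuousOn_term hg i).mono Icc_subset_Ici_self) hle (hb.mul_right _)
  simp only [tsum_const_smul''] at hsum
  refine hsum.tsum_eq.symm.trans (tsum_congr fun i ↦ ?_)
  have hJ := continuousOn_rlIntegral (hC.order_pos i) hg
  rw [rlIntegral_clm_comp (C i) hδ ht (hJ.mono Icc_subset_Ici_self),
    rlIntegral_rlIntegral hδ (hC.order_pos i) ht hg]

theorem hasDerivWithinAt_rlSeries (hC : MittagLefflerSummable C γ) (hg : ContinuousOn g (Ici 0))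
    (ht : 0 ≤ t) :
    HasDerivWithinAt (rlSeries C (fun i ↦ γ i + 1) g) (rlSeries C γ g t) (Ici 0) t :=
  (hasDerivWithinAt_rlIntegral_one (hC.continuousOn_rlSeries hg) ht).congr_of_mem
    (fun _ hs ↦ (hC.rlIntegral_rlSeries hg one_pos hs).symm) ht

theorem integral_tsum_rlKernel_smul (hC : MittagLefflerSummable C γ) (hg : ContinuousOn g (Ici 0))
    (ht : 0 ≤ t) :
    ∫ s in (0 : ℝ)..t, ∑' i, rlKernel (γ i) (t - s) • C i (g s) = rlSeries C γ g t := by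
  have hg' : ContinuousOn g (Icc 0 t) := hg.mono Icc_subset_Ici_self
  obtain ⟨M, hM⟩ := isCompact_Icc.exists_bound_of_continuousOn hg'
  have hbound : ∀ i, ∀ s ∈ Icc 0 t, ‖C i (g s)‖ ≤ M * ‖C i‖ := fun i s hs ↦
    ((C i).le_opNorm_of_le (hM s hs)).trans_eq (mul_comm _ _)
  have hsum : Summable fun i ↦ M * ‖C i‖ * (t ^ γ i / Real.Gamma (γ i + 1)) := by
    simpa only [mul_assoc] using (hC.summable t ht).mul_left M
  refine (hasSum_rlIntegral hC.order_pos ht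
    (fun i ↦ (C i).continuous.comp_continuousOn hg') hbound hsum).tsum_eq.symm.trans ?_
  exact tsum_congr fun i ↦ rlIntegral_clm_comp (C i) (hC.order_pos i) ht hg'

end MittagLefflerSummable

end Series

section Coefficients

lemma Q_succ_zero {R : Type*} [Ring R] (A B : R) (k : ℕ) : Q A B (k + 1) 0 = A * Q A B k 0 := by
  simp only [Q, pow_succ']

lemma Q_zero_succ {R : Type*} [Ring R] (A B : R) (m : ℕ) : Q A B 0 (m + 1) = B * Q A B 0 m := by
  simp [Q]

lemma Q_succ_succ {R : Type*} [Ring R] (A B : R) (k m : ℕ) :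
    Q A B (k + 1) (m + 1) = A * Q A B k (m + 1) + B * Q A B (k + 1) m := by
  rw [Q, Finset.sum_range_succ, Q, Finset.mul_sum]
  congr 1
  · refine Finset.sum_congr rfl fun l hl ↦ ?_
    rw [Nat.succ_sub (Finset.mem_range_succ_iff.1 hl), pow_succ']
    simp only [mul_assoc]
  · simp

lemma norm_Q_le {R : Type*} [SeminormedRing R] (A B : R) :
    ∀ k m, ‖Q A B k m‖ ≤ ‖(1 : R)‖ * (‖A‖ + ‖B‖) ^ (k + m)
  | 0, 0 => by simp [Q]
  | k + 1, 0 => by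
    rw [Q_succ_zero]
    calc ‖A * Q A B k 0‖ ≤ ‖A‖ * (‖(1 : R)‖ * (‖A‖ + ‖B‖) ^ (k + 0)) :=
          norm_mul_le_of_le le_rfl (norm_Q_le A B k 0)
      _ ≤ (‖A‖ + ‖B‖) * (‖(1 : R)‖ * (‖A‖ + ‖B‖) ^ (k + 0)) := by
          gcongr; exact le_add_of_nonneg_right (norm_nonneg B)
      _ = ‖(1 : R)‖ * (‖A‖ + ‖B‖) ^ (k + 1 + 0) := by ring
  | 0, m + 1 => by
    rw [Q_zero_succ]
    calc ‖B * Q A B 0 m‖ ≤ ‖B‖ * (‖(1 : R)‖ * (‖A‖ + ‖B‖) ^ (0 + m)) :=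
          norm_mul_le_of_le le_rfl (norm_Q_le A B 0 m)
      _ ≤ (‖A‖ + ‖B‖) * (‖(1 : R)‖ * (‖A‖ + ‖B‖) ^ (0 + m)) := by
          gcongr; exact le_add_of_nonneg_left (norm_nonneg A)
      _ = ‖(1 : R)‖ * (‖A‖ + ‖B‖) ^ (0 + (m + 1)) := by ring
  | k + 1, m + 1 => by
    rw [Q_succ_succ]
    calc ‖A * Q A B k (m + 1) + B * Q A B (k + 1) m‖
        ≤ ‖A‖ * (‖(1 : R)‖ * (‖A‖ + ‖B‖) ^ (k + (m + 1))) +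
            ‖B‖ * (‖(1 : R)‖ * (‖A‖ + ‖B‖) ^ (k + 1 + m)) :=
          norm_add_le_of_le (norm_mul_le_of_le le_rfl (norm_Q_le A B k (m + 1)))
            (norm_mul_le_of_le le_rfl (norm_Q_le A B (k + 1) m))
      _ = ‖(1 : R)‖ * (‖A‖ + ‖B‖) ^ (k + 1 + (m + 1)) := by ring

end Coefficients

section Summability

lemma rpow_le_exp_mul_Gamma {R x : ℝ} (hR : 0 ≤ R) (hx : 0 ≤ x) :
    R ^ x ≤ Real.exp R * Real.Gamma (x + 1) := by
  have hint : IntegrableOn (fun t : ℝ ↦ Real.exp (-t) * t ^ x) (Ioi 0) := by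
    simpa only [add_sub_cancel_right] using Real.GammaIntegral_convergent (s := x + 1) (by linarith)
  suffices h : R ^ x * Real.exp (-R) ≤ Real.Gamma (x + 1) by
    rwa [Real.exp_neg, ← div_eq_mul_inv, div_le_iff₀' (Real.exp_pos R)] at h
  calc R ^ x * Real.exp (-R) = ∫ t in Ioi R, R ^ x * Real.exp (-t) := by
        rw [integral_const_mul, integral_exp_neg_Ioi]
    _ ≤ ∫ t in Ioi R, Real.exp (-t) * t ^ x := by
        refine setIntegral_mono_on ((integrableOn_exp_neg_Ioi R).const_mul _)
          (hint.mono_set (Ioi_subset_Ioi hR)) measurableSet_Ioi fun t ht ↦ ?_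
        rw [mul_comm]
        gcongr
        exact le_of_lt ht
    _ ≤ ∫ t in Ioi 0, Real.exp (-t) * t ^ x :=
        setIntegral_mono_set hint
          (ae_restrict_of_forall_mem measurableSet_Ioi fun t ht ↦
            mul_nonneg (Real.exp_pos _).le (Real.rpow_nonneg (le_of_lt ht) x))
          (Ioi_subset_Ioi hR).eventuallyLE
    _ = Real.Gamma (x + 1) := by
        rw [Real.Gamma_eq_integral (by linarith), add_sub_cancel_right]

lemma rpow_div_Gamma_le {R t x : ℝ} (hR : 0 < R) (ht : 0 ≤ t) (hx : 0 ≤ x) :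
    t ^ x / Real.Gamma (x + 1) ≤ Real.exp R * (t / R) ^ x := by
  rw [div_le_iff₀ (Real.Gamma_pos_of_pos (by linarith))]
  calc t ^ x = (t / R) ^ x * R ^ x := by
        rw [← Real.mul_rpow (by positivity) hR.le, div_mul_cancel₀ _ hR.ne']
    _ ≤ (t / R) ^ x * (Real.exp R * Real.Gamma (x + 1)) := by
        gcongr; exact rpow_le_exp_mul_Gamma hR.le hx
    _ = Real.exp R * (t / R) ^ x * Real.Gamma (x + 1) := by ring

lemma tendsto_const_mul_div_rpow_atTop {σ : ℝ} (hσ : 0 < σ) (M t : ℝ) :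
    Tendsto (fun R : ℝ ↦ M * (t / R) ^ σ) atTop (𝓝 0) := by
  simpa only [Real.zero_rpow hσ.ne', mul_zero, id_eq] using
    ((tendsto_const_nhds.div_atTop tendsto_id).rpow_const (.inr hσ.le)).const_mul M

lemma summable_pow_mul_rpow_div_Gamma {σ τ c : ℝ} (hσ : 0 < σ) (hτ : 0 < τ) (hc : 0 ≤ c)
    {M t : ℝ} (hM : 0 ≤ M) (ht : 0 ≤ t) :
    Summable fun p : ℕ × ℕ ↦ M ^ (p.1 + p.2) *
      (t ^ (p.1 * σ + p.2 * τ + c) / Real.Gamma (p.1 * σ + p.2 * τ + c + 1)) := by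
  have hsmall : ∀ {ρ : ℝ}, 0 < ρ → ∀ᶠ R in atTop, M * (t / R) ^ ρ < 1 := fun hρ ↦
    (tendsto_const_mul_div_rpow_atTop hρ M t).eventually_lt_const one_pos
  obtain ⟨R, hR, hRσ, hRτ⟩ :=
    ((eventually_gt_atTop 0).and ((hsmall hσ).and (hsmall hτ))).exists
  have hgeom : Summable fun p : ℕ × ℕ ↦ (M * (t / R) ^ σ) ^ p.1 * (M * (t / R) ^ τ) ^ p.2 :=
    (summable_geometric_of_lt_one (by positivity) hRσ).mul_of_nonneg
      (summable_geometric_of_lt_one (by positivity) hRτ)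
      (fun _ ↦ by positivity) (fun _ ↦ by positivity)
  refine (hgeom.mul_left (Real.exp R * (t / R) ^ c)).of_nonneg_of_le (fun p ↦ ?_) fun p ↦ ?_
  · have := Real.Gamma_nonneg_of_nonneg (show 0 ≤ p.1 * σ + p.2 * τ + c + 1 by positivity)
    positivity
  · have hq : 0 ≤ t / R := by positivity
    calc M ^ (p.1 + p.2) *
          (t ^ (p.1 * σ + p.2 * τ + c) / Real.Gamma (p.1 * σ + p.2 * τ + c + 1))
        ≤ M ^ (p.1 + p.2) * (Real.exp R * (t / R) ^ (p.1 * σ + p.2 * τ + c)) := by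
          gcongr
          exact rpow_div_Gamma_le hR ht (by positivity)
      _ = Real.exp R * (t / R) ^ c * ((M * (t / R) ^ σ) ^ p.1 * (M * (t / R) ^ τ) ^ p.2) := by
          rw [Real.rpow_add_of_nonneg hq (by positivity) hc,
            Real.rpow_add_of_nonneg hq (by positivity) (by positivity), mul_comm (p.1 : ℝ),
            mul_comm (p.2 : ℝ), Real.rpow_mul_natCast hq, Real.rpow_mul_natCast hq]
          ring

end Summability

lemma hasSum_of_pascal {M : Type*} [AddCommMonoid M] [TopologicalSpace M] [ContinuousAdd M]
    {f a b : ℕ × ℕ → M} {y z : M} (ha : HasSum a y) (hb : HasSum b z)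
    (hk : ∀ k, f (k + 1, 0) = a (k, 0)) (hm : ∀ m, f (0, m + 1) = b (0, m))
    (hkm : ∀ k m, f (k + 1, m + 1) = a (k, m + 1) + b (k + 1, m)) :
    HasSum f (f (0, 0) + y + z) := by
  have hi : Function.Injective (Prod.map (· + 1) id : ℕ × ℕ → ℕ × ℕ) :=
    (add_left_injective 1).prodMap Function.injective_id
  have hj : Function.Injective (Prod.map id (· + 1) : ℕ × ℕ → ℕ × ℕ) :=
    Function.injective_id.prodMap (add_left_injective 1)
  have hia : ∀ k m, Function.extend (Prod.map (· + 1) id) a 0 (k + 1, m) = a (k, m) :=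
    fun k m ↦ hi.extend_apply a 0 (k, m)
  have hjb : ∀ k m, Function.extend (Prod.map id (· + 1)) b 0 (k, m + 1) = b (k, m) :=
    fun k m ↦ hj.extend_apply b 0 (k, m)
  convert ((hasSum_ite_eq (0, 0) (f (0, 0))).add ((hasSum_extend_zero hi).2 ha)).add
    ((hasSum_extend_zero hj).2 hb) using 1
  ext ⟨_ | k, _ | m⟩ <;> simp [hia, hjb, hk, hm, hkm]

section MildSeries

variable {Y : Type*} [NormedAddCommGroup Y] [NormedSpace ℝ Y] {A B : Y →L[ℝ] Y} {σ τ c t : ℝ}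
  {g : ℝ → Y}

/-- The formal Neumann series `J^c (1 - A J^σ - B J^τ)⁻¹ g`, where `J^γ` is fractional integration
of order `γ`: expanding the inverse, `Q A B k m` collects the words with `k` letters `A` and `m`
letters `B`, each of which comes with `J ^ (k σ + m τ)`. -/
noncomputable def mildSeries (A B : Y →L[ℝ] Y) (σ τ c : ℝ) (g : ℝ → Y) (t : ℝ) : Y :=
  rlSeries (fun p : ℕ × ℕ ↦ Q A B p.1 p.2) (fun p ↦ p.1 * σ + p.2 * τ + c) g t

theorem mittagLefflerSummable_Q (A B : Y →L[ℝ] Y) (hσ : 0 < σ) (hτ : 0 < τ) (hc : 0 < c) :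
    MittagLefflerSummable (fun p : ℕ × ℕ ↦ Q A B p.1 p.2) (fun p ↦ p.1 * σ + p.2 * τ + c) where
  order_pos p := by positivity
  summable t ht := by
    have hΓ : ∀ p : ℕ × ℕ, 0 ≤ Real.Gamma (p.1 * σ + p.2 * τ + c + 1) := fun p ↦
      Real.Gamma_nonneg_of_nonneg (by positivity)
    refine ((summable_pow_mul_rpow_div_Gamma hσ hτ hc.le (M := ‖A‖ + ‖B‖) (by positivity)
      ht).mul_left ‖(1 : Y →L[ℝ] Y)‖).of_nonneg_of_le (fun p ↦ ?_) fun p ↦ ?_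
    · have := hΓ p
      positivity
    · have := hΓ p
      rw [← mul_assoc]
      gcongr
      exact norm_Q_le A B p.1 p.2

lemma mildSeries_zero : mildSeries A B σ τ c g 0 = 0 :=
  rlSeries_zero _ _ _

variable [CompleteSpace Y]

theorem integral_tsum_eq_mildSeries (hσ : 0 < σ) (hτ : 0 < τ) (hc : 0 < c)
    (hg : ContinuousOn g (Ici 0)) (ht : 0 ≤ t) :
    ∫ s in (0 : ℝ)..t, ∑' p : ℕ × ℕ, ((t - s) ^ (p.1 * σ + p.2 * τ + c - 1) /
        Real.Gamma (p.1 * σ + p.2 * τ + c)) • Q A B p.1 p.2 (g s) =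
      mildSeries A B σ τ c g t :=
  (mittagLefflerSummable_Q A B hσ hτ hc).integral_tsum_rlKernel_smul hg ht

theorem rlIntegral_mildSeries (hσ : 0 < σ) (hτ : 0 < τ) (hc : 0 < c) {δ : ℝ} (hδ : 0 < δ)
    (hg : ContinuousOn g (Ici 0)) (ht : 0 ≤ t) :
    rlIntegral δ (mildSeries A B σ τ c g) t = mildSeries A B σ τ (c + δ) g t := by
  refine ((mittagLefflerSummable_Q A B hσ hτ hc).rlIntegral_rlSeries hg hδ ht).trans ?_
  simp only [add_assoc, mildSeries]

theorem hasDerivWithinAt_mildSeries (hσ : 0 < σ) (hτ : 0 < τ) (hc : 0 < c)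
    (hg : ContinuousOn g (Ici 0)) (ht : 0 ≤ t) :
    HasDerivWithinAt (mildSeries A B σ τ (c + 1) g) (mildSeries A B σ τ c g t) (Ici 0) t := by
  have heq : mildSeries A B σ τ (c + 1) g =
      rlSeries (fun p : ℕ × ℕ ↦ Q A B p.1 p.2) (fun p ↦ p.1 * σ + p.2 * τ + c + 1) g := by
    funext s; simp only [mildSeries, add_assoc]
  rw [heq]
  exact (mittagLefflerSummable_Q A B hσ hτ hc).hasDerivWithinAt_rlSeries hg ht

theorem mildSeries_eq (hσ : 0 < σ) (hτ : 0 < τ) (hc : 0 < c)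
    (hg : ContinuousOn g (Ici 0)) (ht : 0 ≤ t) :
    mildSeries A B σ τ c g t = rlIntegral c g t +
      A (mildSeries A B σ τ (c + σ) g t) + B (mildSeries A B σ τ (c + τ) g t) := by
  have hsum : ∀ d : ℝ, 0 < d → HasSum
      (fun p : ℕ × ℕ ↦ Q A B p.1 p.2 (rlIntegral (p.1 * σ + p.2 * τ + d) g t))
      (mildSeries A B σ τ d g t) := fun d hd ↦
    (mittagLefflerSummable_Q A B hσ hτ hd).hasSum_rlSeries hg ht
  have hσc : ∀ k m : ℕ, ((k + 1 : ℕ) : ℝ) * σ + m * τ + c = k * σ + m * τ + (c + σ) :=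
    fun k m ↦ by push_cast; ring
  have hτc : ∀ k m : ℕ, k * σ + ((m + 1 : ℕ) : ℝ) * τ + c = k * σ + m * τ + (c + τ) :=
    fun k m ↦ by push_cast; ring
  refine ((hsum c hc).unique (hasSum_of_pascal (A.hasSum (hsum (c + σ) (add_pos hc hσ)))
    (B.hasSum (hsum (c + τ) (add_pos hc hτ))) (fun k ↦ ?_) (fun m ↦ ?_) fun k m ↦ ?_)).trans ?_
  · simp only [hσc, Q_succ_zero]; rfl
  · simp only [hτc, Q_zero_succ]; rfl
  · rw [Q_succ_succ, ← hσc, ← hτc]; rfl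
  · simp [Q]

theorem hasDerivWithinAt_mildSeries_one (hσ : 0 < σ) (hτ : 0 < τ)
    (hg : ContinuousOn g (Ici 0)) (ht : 0 ≤ t) :
    HasDerivWithinAt (mildSeries A B σ τ 1 g)
      (g t + A (mildSeries A B σ τ σ g t) + B (mildSeries A B σ τ τ g t)) (Ici 0) t := by
  have hA := A.hasFDerivAt.comp_hasDerivWithinAt t
    (hasDerivWithinAt_mildSeries (A := A) (B := B) hσ hτ hσ hg ht)
  have hB := B.hasFDerivAt.comp_hasDerivWithinAt t
    (hasDerivWithinAt_mildSeries (A := A) (B := B) hσ hτ hτ hg ht)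
  refine (((hasDerivWithinAt_rlIntegral_one hg ht).add hA).add hB).congr_of_mem
    (fun s hs ↦ ?_) ht
  have hrec := mildSeries_eq (A := A) (B := B) hσ hτ one_pos hg hs
  rwa [add_comm 1 σ, add_comm 1 τ] at hrec

theorem hasDerivWithinAt_inv_Gamma_smul_integral_mildSeries (hσ : 0 < σ) (hτ : 0 < τ) {δ η d : ℝ}
    (hδ : 0 < δ) (hd : 0 < d) (hc : 0 < c) (hη : δ - 1 = η) (hcd : c + η = d)
    (hg : ContinuousOn g (Ici 0)) {x : ℝ → Y} (hx : EqOn x (mildSeries A B σ τ c g) (Ici 0))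
    (ht : 0 ≤ t) :
    HasDerivWithinAt (fun r ↦ (Real.Gamma δ)⁻¹ • ∫ s in (0 : ℝ)..r, (r - s) ^ η • x s)
      (mildSeries A B σ τ d g t) (Ici 0) t := by
  refine (hasDerivWithinAt_mildSeries hσ hτ hd hg ht).congr_of_mem (fun r hr ↦ ?_) ht
  rw [← hη, inv_Gamma_smul_integral, rlIntegral_congr hr (hx.mono Icc_subset_Ici_self),
    rlIntegral_mildSeries hσ hτ hc hδ hg hr, ← hcd, ← hη, add_assoc, sub_add_cancel]

end MildSeries

theorem particular_mild_solution_general {Y : Type*} [NormedAddCommGroup Y] [NormedSpace ℝ Y]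
    [CompleteSpace Y] (A B : Y →L[ℝ] Y) (α β : ℝ)
    (hα1 : 1 < α) (hα2 : α < 2) (hβ1 : β < 1)
    (g : ℝ → Y) (hg : ContinuousOn g (Set.Ici 0)) (xb : ℝ → Y)
    (hxb : ∀ t : ℝ, 0 ≤ t → xb t = ∫ s in (0:ℝ)..t,
      (∑' p : ℕ × ℕ, (((t - s) ^ ((p.1 : ℝ) * (α - β) + (p.2 : ℝ) * α + α - 1)) /
        Real.Gamma ((p.1 : ℝ) * (α - β) + (p.2 : ℝ) * α + α)) • (Q A B p.1 p.2) (g s))) :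
    xb 0 = 0 ∧
    HasDerivWithinAt xb 0 (Set.Ici 0) 0 ∧
    ∃ Iα' Dα Dβ : ℝ → Y,
      (∀ t : ℝ, 0 < t → HasDerivWithinAt
        (fun τ => (Real.Gamma (2 - α))⁻¹ • ∫ s in (0:ℝ)..τ, ((τ - s) ^ (1 - α)) • xb s)
        (Iα' t) (Set.Ici 0) t) ∧
      (∀ t : ℝ, 0 < t → HasDerivWithinAt Iα' (Dα t) (Set.Ici 0) t) ∧
      (∀ t : ℝ, 0 < t → HasDerivWithinAt
        (fun τ => (Real.Gamma (1 - β))⁻¹ • ∫ s in (0:ℝ)..τ, ((τ - s) ^ (-β)) • xb s)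
        (Dβ t) (Set.Ici 0) t) ∧
      (∀ t : ℝ, 0 < t → Dα t - A (Dβ t) = B (xb t) + g t) := by
  have hσ : 0 < α - β := by linarith
  have hα : 0 < α := by linarith
  have hx : EqOn xb (mildSeries A B (α - β) α α g) (Ici 0) := fun t ht ↦
    (hxb t ht).trans (integral_tsum_eq_mildSeries hσ hα hα hg ht)
  have hx' : HasDerivWithinAt xb 0 (Ici 0) 0 := by
    have h := hasDerivWithinAt_mildSeries (A := A) (B := B) hσ hα (sub_pos.2 hα1) hg le_rfl
    rw [sub_add_cancel, mildSeries_zero] at h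
    exact h.congr_of_mem hx self_mem_Ici
  refine ⟨(hx self_mem_Ici).trans mildSeries_zero, hx', _, _, _,
    fun t ht ↦ hasDerivWithinAt_inv_Gamma_smul_integral_mildSeries hσ hα (d := 1) (by linarith)
      one_pos hα (by ring) (by ring) hg hx ht.le,
    fun t ht ↦ hasDerivWithinAt_mildSeries_one hσ hα hg ht.le,
    fun t ht ↦ hasDerivWithinAt_inv_Gamma_smul_integral_mildSeries hσ hα (d := α - β) (by linarith)
      hσ hα (by ring) (by ring) hg hx ht.le,
    fun t ht ↦ ?_⟩
  rw [hx ht.le]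
  abel

/-- The particular mild solution `x̄(t) = ∫₀ᵗ ∑_{k,m} Q_{k,m}^{A,B}
(t−s)^{k(α−β)+mα+α−1}/Γ(k(α−β)+mα+α) g(s) ds` satisfies `x̄(0) = 0`, `x̄'(0) = 0`, its
Riemann–Liouville derivatives of orders `α ∈ (1,2)` and `β ∈ (0,1)` exist for `t > 0`,
and `(ᴿᴸD^α x̄)(t) − A (ᴿᴸD^β x̄)(t) = B x̄(t) + g(t)`. -/
theorem particular_mild_solution {Y : Type*} [NormedAddCommGroup Y] [NormedSpace ℝ Y]
    [CompleteSpace Y] (A B : Y →L[ℝ] Y) (α β : ℝ)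
    (hα1 : 1 < α) (hα2 : α < 2) (hβ0 : 0 < β) (hβ1 : β < 1)
    (g : ℝ → Y) (hg : ContinuousOn g (Set.Ici 0)) (xb : ℝ → Y)
    (hxb : ∀ t : ℝ, 0 ≤ t → xb t = ∫ s in (0:ℝ)..t,
      (∑' p : ℕ × ℕ, (((t - s) ^ ((p.1 : ℝ) * (α - β) + (p.2 : ℝ) * α + α - 1)) /
        Real.Gamma ((p.1 : ℝ) * (α - β) + (p.2 : ℝ) * α + α)) • (Q A B p.1 p.2) (g s))) :
    xb 0 = 0 ∧
    HasDerivWithinAt xb 0 (Set.Ici 0) 0 ∧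
    ∃ Iα' Dα Dβ : ℝ → Y,
      (∀ t : ℝ, 0 < t → HasDerivWithinAt
        (fun τ => (Real.Gamma (2 - α))⁻¹ • ∫ s in (0:ℝ)..τ, ((τ - s) ^ (1 - α)) • xb s)
        (Iα' t) (Set.Ici 0) t) ∧
      (∀ t : ℝ, 0 < t → HasDerivWithinAt Iα' (Dα t) (Set.Ici 0) t) ∧
      (∀ t : ℝ, 0 < t → HasDerivWithinAt
        (fun τ => (Real.Gamma (1 - β))⁻¹ • ∫ s in (0:ℝ)..τ, ((τ - s) ^ (-β)) • xb s)
        (Dβ t) (Set.Ici 0) t) ∧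
      (∀ t : ℝ, 0 < t → Dα t - A (Dβ t) = B (xb t) + g t) :=
  particular_mild_solution_general A B α β hα1 hα2 hβ1 g hg xb hxb
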